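/- For every integer g ≥ 1, the number of pairs (x, y) ∈ ℤ² with |x| ≤ 3g, |y| ≤ 3g, |x| ≠ 3g, |y| ∉ {2g, 3g}, |x + y| ∉ {4g, 5g}, and |x − y| ∉ {4g, 5g} equals 36g² − 36g + 15. (This is the lattice-point count of the g-th dilate of the inside-out polytope P_{(2)} = ([−3,3] × [−3,3]) ∖ {x_1 = ±3, x_2 = ±3, x_2 = ±2, x_1 ± x_2 = ±4, x_1 ± x_2 = ±5}, which the paper identifies with L_{(2)}(g) = 24^g·g!·15·⟨τ_2τ_{3g−3}⟩_g = 36g² − 36g + 15.) -/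

import Mathlib

/-! As `|x + y|` and `|x - y|` are, in some order, `|x| + |y|` and `||x| - |y||`, and the latter is
less than `3g` in the open square `|x|, |y| < 3g`, the eight diagonal lines meet this square only in
the two diamonds `|x| + |y| = 4g` and `|x| + |y| = 5g`. The open square without the lines `y = ±2g`
has `(6g - 1)(6g - 3)` lattice points. On the diamond of radius `r ∈ {4g, 5g}` such a point is
given by its two signs and by `|y| ∈ (r - 3g, 3g) ∖ {2g}`, which makes `4(2g - 2)` and `4(g - 1)`
points to be removed. -/

open Finset

theorem abs_add_eq_or_abs_sub_eq_iff {α : Type*} [AddCommGroup α] [LinearOrder α]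
    [IsOrderedAddMonoid α] {x y r : α} (hx : |x| < r) (hy : |y| < r) :
    |x + y| = r ∨ |x - y| = r ↔ |x| + |y| = r := by
  grind

/-- The lattice points of the sphere of radius `r` about the origin in the `ℓ¹` plane, which for
`r = 4g, 5g` replaces the diagonal lines `x ± y = ±r`. The bounding square only serves to make the
set a `Finset`. -/
noncomputable def l1Sphere (r : ℤ) : Finset (ℤ × ℤ) :=
  {p ∈ Icc (-r) r ×ˢ Icc (-r) r | |p.1| + |p.2| = r}

theorem mem_l1Sphere {r : ℤ} {p : ℤ × ℤ} : p ∈ l1Sphere r ↔ |p.1| + |p.2| = r := by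
  simp only [l1Sphere, mem_filter, mem_product, mem_Icc]
  grind

theorem disjoint_l1Sphere {r s : ℤ} (h : r ≠ s) : Disjoint (l1Sphere r) (l1Sphere s) :=
  disjoint_left.2 fun _ hr hs => h ((mem_l1Sphere.1 hr).symm.trans (mem_l1Sphere.1 hs))

theorem card_filter_abs_snd_mem_l1Sphere {r : ℤ} {s : Finset ℤ} (hs : s ⊆ Ioo 0 r) :
    #{p ∈ l1Sphere r | |p.2| ∈ s} = 4 * #s := by
  have fiber_card : ∀ b ∈ s, #{p ∈ {p ∈ l1Sphere r | |p.2| ∈ s} | |p.2| = b} = 4 := by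
    intro b hb
    obtain ⟨hb₀, hbr⟩ := mem_Ioo.1 (hs hb)
    have fiber_eq : {p ∈ {p ∈ l1Sphere r | |p.2| ∈ s} | |p.2| = b} =
        ({r - b, -(r - b)} : Finset ℤ) ×ˢ ({b, -b} : Finset ℤ) := by
      ext p
      simp only [mem_filter, mem_l1Sphere, mem_product, mem_insert, mem_singleton]
      grind
    rw [fiber_eq, card_product, card_pair (by omega), card_pair (by omega)]
  rw [card_eq_sum_card_fiberwise (t := s) (by exact fun p hp => (mem_filter.1 hp).2),
    sum_const_nat fiber_card, mul_comm]

/-- The lattice points of the open square `|x|, |y| < m` off the two lines `y = ±h`. For `m = 3g`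
and `h = 2g` only the diagonal lines remain to be removed. -/
noncomputable def slitSquare (m h : ℤ) : Finset (ℤ × ℤ) :=
  Ioo (-m) m ×ˢ (Ioo (-m) m \ {h, -h})

theorem mem_slitSquare {m h : ℤ} (hh : 0 ≤ h) {p : ℤ × ℤ} :
    p ∈ slitSquare m h ↔ |p.1| < m ∧ |p.2| < m ∧ |p.2| ≠ h := by
  simp only [slitSquare, mem_product, mem_sdiff, mem_Ioo, mem_insert, mem_singleton, abs_lt,
    ne_eq, abs_eq hh]

theorem card_slitSquare {m h : ℤ} (hh : 0 < h) (hm : h < m) :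
    (#(slitSquare m h) : ℤ) = (2 * m - 1) * (2 * m - 3) := by
  have lines_subset : ({h, -h} : Finset ℤ) ⊆ Ioo (-m) m := by
    simp only [insert_subset_iff, singleton_subset_iff, mem_Ioo]
    omega
  have card_Ioo : (#(Ioo (-m) m) : ℤ) = 2 * m - 1 := by
    rw [Int.card_Ioo]
    omega
  rw [slitSquare, card_product, Nat.cast_mul, cast_card_sdiff lines_subset, card_Ioo,
    card_pair (by omega)]
  push_cast
  ring

theorem card_slitSquare_inter_l1Sphere {m h r : ℤ} (hh : 0 ≤ h) (hr : m ≤ r) :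
    #(slitSquare m h ∩ l1Sphere r) = 4 * #(Ioo (r - m) m \ {h}) := by
  have inter_eq : slitSquare m h ∩ l1Sphere r =
      {p ∈ l1Sphere r | |p.2| ∈ Ioo (r - m) m \ {h}} := by
    ext p
    simp only [mem_inter, mem_slitSquare hh, mem_l1Sphere, mem_filter, mem_sdiff, mem_Ioo,
      mem_singleton]
    omega
  rw [inter_eq, card_filter_abs_snd_mem_l1Sphere]
  exact sdiff_subset.trans (Ioo_subset_Ioo (sub_nonneg.2 hr) hr)

theorem card_slitSquare_inter_l1Sphere_of_lt {m h r : ℤ} (hm : h < m) (hr : m ≤ r)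
    (hrm : r < m + h) :
    (#(slitSquare m h ∩ l1Sphere r) : ℤ) = 4 * (2 * m - r - 2) := by
  have h_mem : h ∈ Ioo (r - m) m := mem_Ioo.2 ⟨by omega, hm⟩
  rw [card_slitSquare_inter_l1Sphere (by omega) hr,
    card_sdiff_of_subset (singleton_subset_iff.2 h_mem), card_singleton, Int.card_Ioo]
  omega

theorem card_slitSquare_inter_l1Sphere_of_le {m h r : ℤ} (hh : 0 ≤ h) (hr : m + h ≤ r)
    (hrm : r < 2 * m) : (#(slitSquare m h ∩ l1Sphere r) : ℤ) = 4 * (2 * m - r - 1) := by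
  have h_notMem : h ∉ Ioo (r - m) m := fun h_mem => by
    have := (mem_Ioo.1 h_mem).1
    omega
  rw [card_slitSquare_inter_l1Sphere hh (by omega), sdiff_singleton_eq_erase,
    erase_eq_of_notMem h_notMem, Int.card_Ioo]
  omega

theorem filter_eq_slitSquare_sdiff {g : ℤ} (hg : 0 ≤ g) :
    {p ∈ Icc (-(3 * g)) (3 * g) ×ˢ Icc (-(3 * g)) (3 * g) |
      |p.1| ≠ 3 * g ∧ |p.2| ≠ 2 * g ∧ |p.2| ≠ 3 * g ∧ |p.1 + p.2| ≠ 4 * g ∧ |p.1 + p.2| ≠ 5 * g ∧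
        |p.1 - p.2| ≠ 4 * g ∧ |p.1 - p.2| ≠ 5 * g} =
      slitSquare (3 * g) (2 * g) \ (l1Sphere (4 * g) ∪ l1Sphere (5 * g)) := by
  ext ⟨x, y⟩
  simp only [mem_filter, mem_product, mem_Icc, ← abs_le, mem_sdiff,
    mem_slitSquare (show 0 ≤ 2 * g by omega), mem_union, mem_l1Sphere]
  by_cases in_square : |x| < 3 * g ∧ |y| < 3 * g
  · obtain ⟨hx, hy⟩ := in_square
    have four_iff : |x + y| = 4 * g ∨ |x - y| = 4 * g ↔ |x| + |y| = 4 * g :=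
      abs_add_eq_or_abs_sub_eq_iff (by omega) (by omega)
    have five_iff : |x + y| = 5 * g ∨ |x - y| = 5 * g ↔ |x| + |y| = 5 * g :=
      abs_add_eq_or_abs_sub_eq_iff (by omega) (by omega)
    omega
  · omega

/-- The number of lattice points in the `g`-th dilate of the inside-out polytope
`P₍₂₎ = ([-3,3] × [-3,3]) ∖ {x₁ = ±3, x₂ = ±3, x₂ = ±2, x₁ ± x₂ = ±4, x₁ ± x₂ = ±5}`,
i.e. the number of pairs `(x, y) ∈ ℤ²` with `|x| ≤ 3g`, `|y| ≤ 3g`, `|x| ≠ 3g`,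
`|y| ∉ {2g, 3g}`, `|x + y| ∉ {4g, 5g}` and `|x - y| ∉ {4g, 5g}`, is `36g² - 36g + 15`. -/
theorem count_P2 (g : ℕ) (hg : 1 ≤ g) :
    (((Finset.Icc (-(3 * (g : ℤ))) (3 * (g : ℤ))) ×ˢ
        (Finset.Icc (-(3 * (g : ℤ))) (3 * (g : ℤ)))).filter
      (fun p : ℤ × ℤ => |p.1| ≠ 3 * (g : ℤ) ∧ |p.2| ≠ 2 * (g : ℤ) ∧ |p.2| ≠ 3 * (g : ℤ) ∧
        |p.1 + p.2| ≠ 4 * (g : ℤ) ∧ |p.1 + p.2| ≠ 5 * (g : ℤ) ∧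
        |p.1 - p.2| ≠ 4 * (g : ℤ) ∧ |p.1 - p.2| ≠ 5 * (g : ℤ))).card
      = 36 * g ^ 2 - 36 * g + 15 := by
  have spheres_disjoint : Disjoint (slitSquare (3 * g) (2 * g) ∩ l1Sphere (4 * g))
      (slitSquare (3 * g) (2 * g) ∩ l1Sphere (5 * g)) :=
    (disjoint_l1Sphere (by omega)).mono inter_subset_right inter_subset_right
  have hle : 36 * g ≤ 36 * g ^ 2 := by gcongr; exact Nat.le_self_pow two_ne_zero g
  rw [filter_eq_slitSquare_sdiff g.cast_nonneg, ← sdiff_inter_self_left, inter_union_distrib_left]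
  zify [hle]
  calc
    _ = (#(slitSquare (3 * g) (2 * g)) : ℤ) - (#(slitSquare (3 * g) (2 * g) ∩ l1Sphere (4 * g)) +
          #(slitSquare (3 * g) (2 * g) ∩ l1Sphere (5 * g))) := by
      rw [cast_card_sdiff (union_subset inter_subset_left inter_subset_left),
        card_union_of_disjoint spheres_disjoint, Nat.cast_add]
    _ = (2 * (3 * g) - 1) * (2 * (3 * g) - 3) -
          (4 * (2 * (3 * g) - 4 * g - 2) + 4 * (2 * (3 * g) - 5 * g - 1)) := by
      rw [card_slitSquare (by omega) (by omega),
        card_slitSquare_inter_l1Sphere_of_lt (by omega) (by omega) (by omega),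
        card_slitSquare_inter_l1Sphere_of_le (by omega) (by omega) (by omega)]
    _ = 36 * (g : ℤ) ^ 2 - 36 * g + 15 := by ring
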